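/- Up to conjugation and sign in O(E₆) ≅ ℤ/2ℤ × W(E₆), there is exactly one isometry of the lattice E₆ of order three without nonzero fixed vectors; its eigenvalues are ζ₃ and ζ₃⁻¹, each with three-dimensional eigenspace. -/

import Mathlib

open Matrix Polynomial

/-- Gram matrix of the root lattice `E₆` in the Bourbaki basis. -/
def GE6 : Matrix (Fin 6) (Fin 6) ℤ :=
  !![2,0,-1,0,0,0; 0,2,0,-1,0,0; -1,0,2,-1,0,0; 0,-1,-1,2,-1,0; 0,0,0,-1,2,-1; 0,0,0,0,-1,2]

/-- `R` is an isometry of `E₆` of order three without nonzero fixed vectors. -/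
def IsTriE6 (R : Matrix (Fin 6) (Fin 6) ℤ) : Prop :=
  IsUnit R.det ∧ Rᵀ * GE6 * R = GE6 ∧ R ^ 3 = 1 ∧ R ≠ 1 ∧
    ∀ v : Fin 6 → ℤ, R.mulVec v = v → v = 0

/-!
If `R ^ 3 = 1` and `R` fixes no nonzero vector, then `1 + R + R ^ 2`, whose image consists of fixed
vectors, vanishes, and the lattice becomes a `ℤ[ζ₃]`-module of rank three. As `X ^ 2 + X + 1` is
prime, the characteristic polynomial is a power of it.

For uniqueness, irreducibility of the root system yields three roots `a, b, c`, independent over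
`ℤ[ζ₃]`, whose Hermitian products form the diagram `a — b — c` of the complex reflection group
`G₂₅`: a linked triangle of roots can be replaced by a path, and the units of `ℤ[ζ₃]` normalize the
two edges. The Gram matrix of `a, R a, b, R b, c, R c` then does not depend on `R`. Its determinant
is `3 = det E₆`, so these six vectors form a basis of `E₆`, and two such bases differ by an isometry
conjugating one `R` to the other.
-/

lemma sub_dvd_aeval_sub_aeval {R A : Type*} [CommSemiring R] [Ring A] [Algebra R A] {x y : A}
    (h : Commute x y) (p : R[X]) : x - y ∣ aeval x p - aeval y p := by
  simp only [aeval_eq_sum_range, ← Finset.sum_sub_distrib, ← smul_sub]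
  refine Finset.dvd_sum fun i _ ↦ ?_
  obtain ⟨z, hz⟩ := h.sub_dvd_pow_sub_pow i
  exact ⟨p.coeff i • z, by rw [hz, mul_smul_comm]⟩

section Matrices

variable {n R : Type*} [Fintype n] [DecidableEq n] [CommRing R]

lemma geom_sum_eq_zero_of_pow_eq_one_of_fixedPointFree {A : Matrix n n R} {m : ℕ}
    (hA : A ^ m = 1) (hfix : ∀ v, A *ᵥ v = v → v = 0) : ∑ i ∈ Finset.range m, A ^ i = 0 := by
  have hmul : A * ∑ i ∈ Finset.range m, A ^ i = ∑ i ∈ Finset.range m, A ^ i := by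
    rw [← sub_eq_zero, ← sub_one_mul, mul_geom_sum, hA, sub_self]
  refine ext_of_mulVec_single fun j ↦ ?_
  rw [zero_mulVec]
  exact hfix _ (by rw [mulVec_mulVec, hmul])

lemma charpoly_dvd_pow_of_aeval_eq_zero {A : Matrix n n R} {p : R[X]} (h : aeval A p = 0) :
    A.charpoly ∣ p ^ Fintype.card n := by
  let A' : Matrix n n R[X] := (CAlgHom : R →ₐ[R] R[X]).mapMatrix A
  have hX : aeval (scalar n X) p = scalar n p :=
    (aeval_algebraMap_apply (Matrix n n R[X]) X p).trans (by rw [aeval_X_left_apply]; rfl)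
  have hA' : aeval A' p = 0 := by
    rw [aeval_algHom_apply, h, map_zero]
  obtain ⟨Q, hQ⟩ := sub_dvd_aeval_sub_aeval (scalar_commute (X : R[X]) (.all _) A') p
  rw [hX, hA', sub_zero] at hQ
  refine ⟨Q.det, ?_⟩
  calc p ^ Fintype.card n = (scalar n p).det := by simp
    _ = A.charpoly * Q.det := by rw [hQ, det_mul]; rfl

lemma exists_charpoly_eq_pow_of_prime [IsDomain R] {A : Matrix n n R} {p : R[X]} (hp : Prime p)
    (hmonic : p.Monic) (h : aeval A p = 0) :
    ∃ k, A.charpoly = p ^ k ∧ k * p.natDegree = Fintype.card n := by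
  obtain ⟨k, -, hk⟩ := (dvd_prime_pow hp _).1 (charpoly_dvd_pow_of_aeval_eq_zero h)
  have hcharpoly := eq_of_monic_of_associated A.charpoly_monic (hmonic.pow k) hk
  exact ⟨k, hcharpoly, by rw [← A.charpoly_natDegree_eq_dim, hcharpoly, hmonic.natDegree_pow]⟩

lemma exists_isometry_conj {G M N A B P Q : Matrix n n R}
    (hP : IsUnit P.det) (hQ : IsUnit Q.det) (hPM : Pᵀ * G * P = M) (hQM : Qᵀ * G * Q = M)
    (hAP : A * P = P * N) (hBQ : B * Q = Q * N) :
    ∃ U : Matrix n n R, IsUnit U.det ∧ Uᵀ * G * U = G ∧ B * U = U * A := by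
  have hPinv : P * P⁻¹ = 1 := mul_nonsing_inv _ hP
  refine ⟨Q * P⁻¹, ?_, ?_, ?_⟩
  · rw [det_mul]
    exact hQ.mul (isUnit_nonsing_inv_det _ hP)
  · calc (Q * P⁻¹)ᵀ * G * (Q * P⁻¹) = (P⁻¹)ᵀ * (Qᵀ * G * Q) * P⁻¹ := by
          rw [transpose_mul]; noncomm_ring
      _ = (P * P⁻¹)ᵀ * G * (P * P⁻¹) := by rw [hQM, ← hPM, transpose_mul]; noncomm_ring
      _ = G := by rw [hPinv, transpose_one, Matrix.one_mul, Matrix.mul_one]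
  · calc B * (Q * P⁻¹) = Q * (P⁻¹ * P) * N * P⁻¹ := by
          rw [nonsing_inv_mul _ hP, Matrix.mul_one, ← hBQ, Matrix.mul_assoc]
      _ = Q * P⁻¹ * (P * N) * P⁻¹ := by noncomm_ring
      _ = Q * P⁻¹ * A * (P * P⁻¹) := by rw [← hAP]; noncomm_ring
      _ = Q * P⁻¹ * A := by rw [hPinv, Matrix.mul_one]

end Matrices

section RootLattices

variable {L : Type*} [AddCommGroup L] {B : LinearMap.BilinForm ℤ L} {x y : L}

/-- `B` is irreducible over its roots (the vectors of square `2`): every proper nonzero subgroup is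
linked to some root outside it. For a positive definite form this says that the roots generate the
lattice and form an irreducible root system. -/
def IsRootIrreducible (B : LinearMap.BilinForm ℤ L) : Prop :=
  ∀ W : Submodule ℤ L, W ≠ ⊥ → W ≠ ⊤ → ∃ r ∉ W, B r r = 2 ∧ ∃ w ∈ W, B w r ≠ 0

lemma eq_of_apply_eq_two (hB : B.IsSymm) (hpos : B.toQuadraticMap.PosDef)
    (hx : B x x = 2) (hy : B y y = 2) (hxy : B x y = 2) : x = y := by
  by_contra hne
  have hlt : 0 < B (x - y) (x - y) := hpos _ (sub_ne_zero.2 hne)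
  simp only [map_sub, LinearMap.sub_apply, hB.eq y x] at hlt
  omega

lemma apply_sub_self_eq_two (hB : B.IsSymm) (hx : B x x = 2) (hy : B y y = 2)
    (hxy : B x y = 1) : B (y - x) (y - x) = 2 := by
  simp only [map_sub, LinearMap.sub_apply, hB.eq y x]
  omega

lemma abs_apply_le_one (hB : B.IsSymm) (hpos : B.toQuadraticMap.PosDef)
    (hx : B x x = 2) (hy : B y y = 2) (hne : x ≠ y) (hne' : x ≠ -y) : |B x y| ≤ 1 := by
  have hsub : 0 < B (x - y) (x - y) := hpos _ (sub_ne_zero.2 hne)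
  have hadd : 0 < B (x + y) (x + y) := hpos _ (mt eq_neg_of_add_eq_zero_left hne')
  simp only [map_sub, map_add, LinearMap.sub_apply, LinearMap.add_apply, hB.eq y x] at hsub hadd
  rw [abs_le]
  omega

lemma isRootIrreducible_of_basis (hpos : B.toQuadraticMap.PosDef) {ι : Type*}
    (e : Module.Basis ι ℤ L) (he : ∀ i, B (e i) (e i) = 2)
    (hconn : ∀ i j, Relation.ReflTransGen (fun i j ↦ B (e i) (e j) ≠ 0) i j) :
    IsRootIrreducible B := by
  intro W hbot htop
  by_contra! hW
  have hmem {w : L} {i : ι} (hw : w ∈ W) (hwi : B w (e i) ≠ 0) : e i ∈ W := by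
    by_contra hi
    exact hwi (hW (e i) hi (he i) w hw)
  obtain ⟨w, hw, hw0⟩ := (Submodule.ne_bot_iff W).1 hbot
  obtain ⟨i, hwi⟩ : ∃ i, B w (e i) ≠ 0 := by
    by_contra! h
    have hBw : B w = 0 := e.ext h
    exact (hpos w hw0).ne' (congrArg (· w) hBw)
  have hall (j : ι) : e j ∈ W := by
    induction hconn i j with
    | refl => exact hmem hw hwi
    | tail _ hadj ih => exact hmem ih hadj
  refine htop (top_unique ?_)
  rw [← e.span_eq]
  exact Submodule.span_le.2 (Set.range_subset_iff.2 hall)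

end RootLattices

lemma units_of_sq_add_mul_add_sq_eq_one {p q : ℤ} (h : p ^ 2 + p * q + q ^ 2 = 1) :
    (p = -1 ∧ q = 1) ∨ (p = 1 ∧ q = -1) ∨ (p = 1 ∧ q = 0) ∨ (p = -1 ∧ q = 0) ∨
      (p = 0 ∧ q = -1) ∨ (p = 0 ∧ q = 1) := by
  have hp : -1 ≤ p ∧ p ≤ 1 := by constructor <;> nlinarith [sq_nonneg (p + 2 * q)]
  have hq : -1 ≤ q ∧ q ≤ 1 := by constructor <;> nlinarith [sq_nonneg (2 * p + q)]
  obtain ⟨⟨hp, hp'⟩, hq, hq'⟩ := And.intro hp hq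
  interval_cases p <;> interval_cases q <;> omega

/-- An isometry `f` of the integral form `B` with `f² + f + 1 = 0`; it makes the lattice a module
over the Eisenstein integers `ℤ[ζ₃]`. -/
structure IsEisensteinIsometry {L : Type*} [AddCommGroup L] (B : LinearMap.BilinForm ℤ L)
    (f : Module.End ℤ L) : Prop where
  map_map : ∀ x y, B (f x) (f y) = B x y
  apply_apply : ∀ x, f (f x) = -x - f x

section Eisenstein

variable {L : Type*} [AddCommGroup L] {B : LinearMap.BilinForm ℤ L} {f : Module.End ℤ L}
  {a b c x y : L}

/-- The squared modulus of the `ℤ[ζ₃]`-Hermitian product `∑ i < 3, B (f^i x) y * ζ₃ ^ i` of `x` and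
`y`, divided by `3`. -/
def hermitianNorm (B : LinearMap.BilinForm ℤ L) (f : Module.End ℤ L) (x y : L) : ℤ :=
  B x y ^ 2 + B x y * B (f x) y + B (f x) y ^ 2

/-- The `ℤ[ζ₃]`-submodule generated by `s`, where `ζ₃` acts as `f` and `f² + f + 1 = 0`. -/
def eisensteinSpan (f : Module.End ℤ L) (s : Set L) : Submodule ℤ L :=
  Submodule.span ℤ (s ∪ f '' s)

lemma subset_eisensteinSpan (f : Module.End ℤ L) (s : Set L) : s ⊆ eisensteinSpan f s :=
  Set.subset_union_left.trans Submodule.subset_span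

lemma eisensteinSpan_mono {s t : Set L} (hst : s ⊆ t) : eisensteinSpan f s ≤ eisensteinSpan f t :=
  Submodule.span_mono (Set.union_subset_union hst (Set.image_mono hst))

lemma finrank_eisensteinSpan_le (f : Module.End ℤ L) (s : Finset L) :
    Module.finrank ℤ (eisensteinSpan f s) ≤ 2 * s.card := by
  classical
  have hspan : eisensteinSpan f s = Submodule.span ℤ ↑(s ∪ s.image f) := by
    rw [eisensteinSpan, Finset.coe_union, Finset.coe_image]
  rw [hspan, two_mul]
  exact (finrank_span_finset_le_card _).trans <|
    (Finset.card_union_le _ _).trans (Nat.add_le_add_left Finset.card_image_le _)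

lemma hermitianNorm_eq_zero_iff : hermitianNorm B f x y = 0 ↔ B x y = 0 ∧ B (f x) y = 0 := by
  constructor
  · intro h
    unfold hermitianNorm at h
    constructor <;>
      nlinarith [sq_nonneg (B x y), sq_nonneg (B (f x) y), sq_nonneg (B x y + B (f x) y)]
  · rintro ⟨h, h'⟩
    simp [hermitianNorm, h, h']

lemma hermitianNorm_neg_right (x y : L) : hermitianNorm B f x (-y) = hermitianNorm B f x y := by
  simp only [hermitianNorm, map_neg]
  ring

lemma exists_root_notMem_eisensteinSpan (hirr : IsRootIrreducible B) {s : Finset L}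
    (hs : ∃ x ∈ s, x ≠ 0) (hrank : 2 * s.card < Module.finrank ℤ L) :
    ∃ r ∉ eisensteinSpan f s, B r r = 2 ∧ ∃ x ∈ s, hermitianNorm B f x r ≠ 0 := by
  have hbot : eisensteinSpan f s ≠ ⊥ := by
    obtain ⟨x, hx, hx0⟩ := hs
    exact (Submodule.ne_bot_iff _).2 ⟨x, subset_eisensteinSpan f _ hx, hx0⟩
  have htop : eisensteinSpan f s ≠ ⊤ := by
    intro htop
    have hle := finrank_eisensteinSpan_le f s
    rw [htop, finrank_top] at hle
    omega
  obtain ⟨r, hr, hrr, w, hw, hwr⟩ := hirr _ hbot htop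
  refine ⟨r, hr, hrr, ?_⟩
  by_contra! horth
  suffices h : eisensteinSpan f s ≤ LinearMap.ker (B.flip r) from hwr (h hw)
  refine Submodule.span_le.2 (Set.union_subset (fun x hx ↦ ?_) ?_)
  · exact (hermitianNorm_eq_zero_iff.1 (horth x hx)).1
  · rintro - ⟨x, hx, rfl⟩
    exact (hermitianNorm_eq_zero_iff.1 (horth x hx)).2

/-- Three roots spanning, over `ℤ[ζ₃]`, the diagram `a — b — c` of the complex reflection
group `G₂₅`; each edge is normalized by the choice of a unit multiple of its outer vertex. -/
structure IsEisensteinFrame (B : LinearMap.BilinForm ℤ L) (f : Module.End ℤ L) (a b c : L) :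
    Prop where
  apply_left : B a a = 2
  apply_middle : B b b = 2
  apply_right : B c c = 2
  middle_left : B b a = -1
  map_middle_left : B (f b) a = 1
  middle_right : B b c = -1
  map_middle_right : B (f b) c = 1
  left_right : B a c = 0
  map_left_right : B (f a) c = 0

namespace IsEisensteinIsometry

lemma apply_mem_eisensteinSpan (hf : IsEisensteinIsometry B f) {s : Set L}
    (hx : x ∈ eisensteinSpan f s) : f x ∈ eisensteinSpan f s := by
  suffices h : eisensteinSpan f s ≤ (eisensteinSpan f s).comap f from h hx
  refine Submodule.span_le.2 (Set.union_subset (fun y hy ↦ ?_) ?_)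
  · exact Submodule.subset_span (Or.inr ⟨y, hy, rfl⟩)
  · rintro - ⟨y, hy, rfl⟩
    rw [SetLike.mem_coe, Submodule.mem_comap, hf.apply_apply]
    exact sub_mem (neg_mem (Submodule.subset_span (Or.inl hy)))
      (Submodule.subset_span (Or.inr ⟨y, hy, rfl⟩))

lemma apply_mem_eisensteinSpan_iff (hf : IsEisensteinIsometry B f) {s : Set L} :
    f x ∈ eisensteinSpan f s ↔ x ∈ eisensteinSpan f s := by
  refine ⟨fun h ↦ ?_, hf.apply_mem_eisensteinSpan⟩
  have hx : x = -f (f x) - f x := by rw [hf.apply_apply]; abel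
  rw [hx]
  exact sub_mem (neg_mem (hf.apply_mem_eisensteinSpan h)) h

lemma apply_map_right (hf : IsEisensteinIsometry B f) (x y : L) :
    B x (f y) = -B x y - B (f x) y := by
  rw [← hf.map_map x (f y), hf.apply_apply, map_sub, map_neg, hf.map_map]
  ring

lemma map_apply_self (hf : IsEisensteinIsometry B f) (hB : B.IsSymm) (hx : B x x = 2) :
    B (f x) x = -1 := by
  have h := hf.apply_map_right x x
  rw [hB.eq x (f x)] at h
  omega

lemma hermitianNorm_comm (hf : IsEisensteinIsometry B f) (hB : B.IsSymm) (x y : L) :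
    hermitianNorm B f x y = hermitianNorm B f y x := by
  simp only [hermitianNorm, hB.eq y x, hB.eq (f y) x, hf.apply_map_right]
  ring

lemma hermitianNorm_map_right (hf : IsEisensteinIsometry B f) (x y : L) :
    hermitianNorm B f x (f y) = hermitianNorm B f x y := by
  simp only [hermitianNorm, hf.map_map, hf.apply_map_right x y]
  ring

lemma hermitianNorm_eq_one (hf : IsEisensteinIsometry B f) (hB : B.IsSymm)
    (hpos : B.toQuadraticMap.PosDef) (hx : B x x = 2) (hy : B y y = 2)
    (hmem : y ∉ eisensteinSpan f {x}) (hne : hermitianNorm B f x y ≠ 0) :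
    hermitianNorm B f x y = 1 := by
  have abs_apply_le {z : L} (hz : z ∈ eisensteinSpan f {x}) (hz2 : B z z = 2) : |B z y| ≤ 1 := by
    refine abs_apply_le_one hB hpos hz2 hy ?_ ?_ <;> rintro rfl
    · exact hmem hz
    · exact hmem (neg_mem_iff.1 hz)
  have hx0 : x ∈ eisensteinSpan f {x} := subset_eisensteinSpan f {x} rfl
  have hx1 := hf.apply_mem_eisensteinSpan hx0
  have h0 := abs_apply_le hx0 hx
  have h1 := abs_apply_le hx1 (by rw [hf.map_map, hx])
  have h2 := abs_apply_le (hf.apply_mem_eisensteinSpan hx1) (by rw [hf.map_map, hf.map_map, hx])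
  rw [hf.apply_apply, map_sub, map_neg, LinearMap.sub_apply, LinearMap.neg_apply] at h2
  unfold hermitianNorm at hne ⊢
  generalize B x y = p, B (f x) y = q at *
  rw [abs_le] at h0 h1 h2
  obtain ⟨hp, hp'⟩ := h0
  obtain ⟨hq, hq'⟩ := h1
  interval_cases p <;> interval_cases q <;> first | rfl | omega

/- The unit multiples of `y` realize each of the six possible values of `(B x y, B (f x) y)`. -/
lemma exists_normalized (hf : IsEisensteinIsometry B f) {p : L → Prop} (hpf : ∀ z, p z → p (f z))
    (hpneg : ∀ z, p z → p (-z)) (hy : p y) (hxy : hermitianNorm B f x y = 1) :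
    ∃ z, p z ∧ B x z = -1 ∧ B (f x) z = 1 := by
  have hval := hf.apply_map_right x y
  have hval' := hf.apply_map_right x (f y)
  rw [hf.map_map] at hval'
  rcases units_of_sq_add_mul_add_sq_eq_one hxy with h | h | h | h | h | h
  · exact ⟨y, hy, h⟩
  · exact ⟨-y, hpneg _ hy, by simp [h]⟩
  · exact ⟨f y, hpf _ hy, by simp [hval, hf.map_map, h]⟩
  · exact ⟨-f y, hpneg _ (hpf _ hy), by simp [hval, hf.map_map, h]⟩
  · exact ⟨f (f y), hpf _ (hpf _ hy), by simp [hval', hval, hf.map_map, h]⟩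
  · exact ⟨-f (f y), hpneg _ (hpf _ (hpf _ hy)), by simp [hval', hval, hf.map_map, h]⟩

lemma exists_normalized_orthogonal (hf : IsEisensteinIsometry B f) {w : L} (hy : B y y = 2)
    (hwy : hermitianNorm B f w y = 0) (hxy : hermitianNorm B f x y = 1) :
    ∃ z, B z z = 2 ∧ hermitianNorm B f w z = 0 ∧ B x z = -1 ∧ B (f x) z = 1 := by
  obtain ⟨z, ⟨hz, hwz⟩, hxz⟩ := hf.exists_normalized
    (p := fun z ↦ B z z = 2 ∧ hermitianNorm B f w z = 0)
    (fun z hz ↦ by rwa [hf.map_map, hf.hermitianNorm_map_right])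
    (fun z hz ↦ by simpa only [map_neg, LinearMap.neg_apply, neg_neg, hermitianNorm_neg_right])
    ⟨hy, hwy⟩ hxy
  exact ⟨z, hz, hwz, hxz⟩

lemma exists_frame_of_path (hf : IsEisensteinIsometry B f) (hB : B.IsSymm) (ha : B a a = 2)
    (hb : B b b = 2) (hc : B c c = 2) (hba : hermitianNorm B f b a = 1)
    (hbc : hermitianNorm B f b c = 1) (hac : hermitianNorm B f a c = 0) :
    ∃ a b c, IsEisensteinFrame B f a b c := by
  rw [hf.hermitianNorm_comm hB] at hac
  obtain ⟨a', ha', hca', hba', hfba'⟩ := hf.exists_normalized_orthogonal ha hac hba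
  rw [hf.hermitianNorm_comm hB] at hca'
  obtain ⟨c', hc', hac', hbc', hfbc'⟩ := hf.exists_normalized_orthogonal hc hca' hbc
  obtain ⟨hac0, hfac0⟩ := hermitianNorm_eq_zero_iff.1 hac'
  exact ⟨a', b, c', ha', hb, hc', hba', hfba', hbc', hfbc', hac0, hfac0⟩

/- If `f b` or `f² b` had product `1` with `c`, then `c - f b` or `c - f² b` would be a root whose
product with `f a`, respectively `-a`, is `2`. -/
lemma apply_eq_one_of_triangle (hf : IsEisensteinIsometry B f) (hB : B.IsSymm)
    (hpos : B.toQuadraticMap.PosDef) (ha : B a a = 2) (hb : B b b = 2) (hc : B c c = 2)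
    (hab : B a b = -1) (hfab : B (f a) b = 1) (hac : B a c = -1) (hfac : B (f a) c = 1)
    (hbc : hermitianNorm B f b c = 1) (hmem : c ∉ eisensteinSpan f {a, b}) : B b c = 1 := by
  have ha' : a ∈ eisensteinSpan f {a, b} := subset_eisensteinSpan f _ (Or.inl rfl)
  have hfb' : f b ∈ eisensteinSpan f {a, b} :=
    hf.apply_mem_eisensteinSpan (subset_eisensteinSpan f _ (Or.inr rfl))
  have hfb : B (f b) (f b) = 2 := by rw [hf.map_map, hb]
  have hffb : B (f (f b)) (f (f b)) = 2 := by rw [hf.map_map, hfb]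
  have hafb : B a (f b) = 0 := by rw [hf.apply_map_right, hab, hfab]; rfl
  have haffb : B a (f (f b)) = 1 := by rw [hf.apply_map_right, hafb, hf.map_map, hab]; rfl
  have hne : B (f b) c ≠ 1 := by
    intro h
    have heq : f a = c - f b :=
      eq_of_apply_eq_two hB hpos (by rw [hf.map_map, ha]) (apply_sub_self_eq_two hB hfb hc h)
        (by rw [map_sub, hfac, hf.map_map, hab]; rfl)
    exact hmem (eq_add_of_sub_eq heq.symm ▸ add_mem (hf.apply_mem_eisensteinSpan ha') hfb')
  have hne' : B (f (f b)) c ≠ 1 := by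
    intro h
    have heq : -a = c - f (f b) :=
      eq_of_apply_eq_two hB hpos (by simpa using ha) (apply_sub_self_eq_two hB hffb hc h)
        (by rw [map_neg, LinearMap.neg_apply, map_sub, hac, haffb]; rfl)
    exact hmem (eq_add_of_sub_eq heq.symm ▸
      add_mem (neg_mem ha') (hf.apply_mem_eisensteinSpan hfb'))
  rw [hf.apply_apply, map_sub, map_neg, LinearMap.sub_apply, LinearMap.neg_apply] at hne'
  rcases units_of_sq_add_mul_add_sq_eq_one hbc with h | h | h | h | h | h <;> omega

/- The vertex `c` of the triangle is replaced by the root `c' - b`, for a suitable unit multiple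
`c'` of `c`. -/
lemma exists_frame_of_triangle (hf : IsEisensteinIsometry B f) (hB : B.IsSymm)
    (hpos : B.toQuadraticMap.PosDef) (ha : B a a = 2) (hb : B b b = 2) (hc : B c c = 2)
    (hab : B a b = -1) (hfab : B (f a) b = 1) (hac : hermitianNorm B f a c = 1)
    (hbc : hermitianNorm B f b c = 1) (hmem : c ∉ eisensteinSpan f {a, b}) :
    ∃ a b c, IsEisensteinFrame B f a b c := by
  obtain ⟨c', ⟨hc', hbc', hmem'⟩, hac', hfac'⟩ := hf.exists_normalized
    (p := fun z ↦ B z z = 2 ∧ hermitianNorm B f b z = 1 ∧ z ∉ eisensteinSpan f {a, b})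
    (fun z hz ↦ by
      rwa [hf.map_map, hf.hermitianNorm_map_right, hf.apply_mem_eisensteinSpan_iff])
    (fun z hz ↦ by
      simpa only [map_neg, LinearMap.neg_apply, neg_neg, hermitianNorm_neg_right, neg_mem_iff])
    ⟨hc, hbc, hmem⟩ hac
  have hbc1 : B b c' = 1 :=
    hf.apply_eq_one_of_triangle hB hpos ha hb hc' hab hfab hac' hfac' hbc' hmem'
  have hroot : B (c' - b) (c' - b) = 2 := apply_sub_self_eq_two hB hb hc' hbc1
  have horth : hermitianNorm B f a (c' - b) = 0 :=
    hermitianNorm_eq_zero_iff.2 (by simp [hac', hab, hfac', hfab])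
  have hlink : hermitianNorm B f b (c' - b) = 1 := by
    refine hf.hermitianNorm_eq_one hB hpos hb hroot (fun h ↦ hmem' ?_) (fun h ↦ ?_)
    · have hb' : b ∈ eisensteinSpan f {b} := subset_eisensteinSpan f {b} rfl
      exact eisensteinSpan_mono (Set.subset_insert a {b}) (by simpa using add_mem h hb')
    · have h0 := (hermitianNorm_eq_zero_iff.1 h).1
      rw [map_sub, hbc1, hb] at h0
      omega
  refine hf.exists_frame_of_path hB ha hb hroot ?_ hlink horth
  rw [hf.hermitianNorm_comm hB]
  simp [hermitianNorm, hab, hfab]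

lemma exists_normalized_root (hf : IsEisensteinIsometry B f) (hB : B.IsSymm)
    (hpos : B.toQuadraticMap.PosDef) (hirr : IsRootIrreducible B)
    (hrank : 2 < Module.finrank ℤ L) (ha : B a a = 2) :
    ∃ b, B b b = 2 ∧ B a b = -1 ∧ B (f a) b = 1 := by
  have ha0 : a ≠ 0 := by rintro rfl; simp at ha
  obtain ⟨r, hmem, hr, x, hx, hxr⟩ := exists_root_notMem_eisensteinSpan (f := f) (s := {a}) hirr
    ⟨a, by simp, ha0⟩ (by simpa using hrank)
  rw [Finset.mem_singleton] at hx
  rw [Finset.coe_singleton] at hmem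
  subst hx
  exact hf.exists_normalized (p := fun z ↦ B z z = 2) (fun z hz ↦ by rwa [hf.map_map])
    (fun z hz ↦ by simpa using hz) hr (hf.hermitianNorm_eq_one hB hpos ha hr hmem hxr)

theorem exists_frame (hf : IsEisensteinIsometry B f) (hB : B.IsSymm)
    (hpos : B.toQuadraticMap.PosDef) (hirr : IsRootIrreducible B)
    (hrank : 4 < Module.finrank ℤ L) (hroot : ∃ a, B a a = 2) :
    ∃ a b c, IsEisensteinFrame B f a b c := by
  classical
  obtain ⟨a, ha⟩ := hroot
  obtain ⟨b, hb, hab, hfab⟩ := hf.exists_normalized_root hB hpos hirr (by omega) ha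
  have hab1 : hermitianNorm B f a b = 1 := by simp [hermitianNorm, hab, hfab]
  have ha0 : a ≠ 0 := by rintro rfl; simp at ha
  obtain ⟨s, hmem, hs, hlink⟩ := exists_root_notMem_eisensteinSpan (f := f) (s := {a, b}) hirr
    ⟨a, by simp, ha0⟩ (by have := Finset.card_le_two (a := a) (b := b); omega)
  rw [Finset.coe_pair] at hmem
  have hnorm {x : L} (hx : B x x = 2) (hxab : x ∈ ({a, b} : Set L))
      (hne : hermitianNorm B f x s ≠ 0) : hermitianNorm B f x s = 1 :=
    hf.hermitianNorm_eq_one hB hpos hx hs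
      (fun h ↦ hmem (eisensteinSpan_mono (Set.singleton_subset_iff.2 hxab) h)) hne
  by_cases has : hermitianNorm B f a s = 0
  · have hbs : hermitianNorm B f b s ≠ 0 := by simpa [has] using hlink
    refine hf.exists_frame_of_path hB ha hb hs ?_ (hnorm hb (Or.inr rfl) hbs) has
    rw [hf.hermitianNorm_comm hB, hab1]
  by_cases hbs : hermitianNorm B f b s = 0
  · exact hf.exists_frame_of_path hB hb ha hs hab1 (hnorm ha (Or.inl rfl) has) hbs
  · exact hf.exists_frame_of_triangle hB hpos ha hb hs hab hfab (hnorm ha (Or.inl rfl) has)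
      (hnorm hb (Or.inr rfl) hbs) hmem

end IsEisensteinIsometry

/-- The Gram matrix of `a, f a, b, f b, c, f c` for an Eisenstein frame `a, b, c`. -/
def frameGram : Matrix (Fin 6) (Fin 6) ℤ :=
  !![2, -1, -1, 1, 0, 0; -1, 2, 0, -1, 0, 0; -1, 0, 2, -1, -1, 0;
    1, -1, -1, 2, 1, -1; 0, 0, -1, 1, 2, -1; 0, 0, 0, -1, -1, 2]

/-- The matrix of `f` with respect to `a, f a, b, f b, c, f c`, when `f² + f + 1 = 0`. -/
def frameCompanion : Matrix (Fin 6) (Fin 6) ℤ :=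
  !![0, -1, 0, 0, 0, 0; 1, -1, 0, 0, 0, 0; 0, 0, 0, -1, 0, 0;
    0, 0, 1, -1, 0, 0; 0, 0, 0, 0, 0, -1; 0, 0, 0, 0, 1, -1]

lemma IsEisensteinFrame.apply_eq_frameGram (hF : IsEisensteinFrame B f a b c)
    (hf : IsEisensteinIsometry B f) (hB : B.IsSymm) (i j : Fin 6) :
    B (![a, f a, b, f b, c, f c] i) (![a, f a, b, f b, c, f c] j) = frameGram i j := by
  obtain ⟨haa, hbb, hcc, hba, hfba, hbc, hfbc, hac, hfac⟩ := hF
  have hbfa : B b (f a) = 0 := by rw [hf.apply_map_right, hba, hfba]; rfl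
  have hbfc : B b (f c) = 0 := by rw [hf.apply_map_right, hbc, hfbc]; rfl
  have hafc : B a (f c) = 0 := by rw [hf.apply_map_right, hac, hfac]; rfl
  have hself {x : L} (hx : B x x = 2) := hf.map_apply_self hB hx
  fin_cases i <;> fin_cases j <;>
    simp [frameGram, hf.map_map, hself, haa, hbb, hcc, hba, hfba, hbc, hfbc, hac, hfac, hbfa,
      hbfc, hafc, hB.eq a (f a), hB.eq a b, hB.eq a (f b), hB.eq (f a) b, hB.eq b (f b),
      hB.eq c a, hB.eq c (f a), hB.eq c b, hB.eq c (f b), hB.eq c (f c), hB.eq (f c) a,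
      hB.eq (f c) b]

lemma IsEisensteinIsometry.apply_frame (hf : IsEisensteinIsometry B f) (a b c : L) (j : Fin 6) :
    f (![a, f a, b, f b, c, f c] j) =
      ∑ i, frameCompanion i j • ![a, f a, b, f b, c, f c] i := by
  fin_cases j <;>
    simp [frameCompanion, Fin.sum_univ_succ, hf.apply_apply, sub_eq_add_neg, add_comm]

end Eisenstein

lemma det_GE6 : GE6.det = 3 := by decide +kernel

lemma det_frameGram : frameGram.det = 3 := by decide +kernel

lemma isSymm_GE6 : GE6.IsSymm := by
  unfold Matrix.IsSymm
  decide

lemma isSymm_toBilin'_GE6 : GE6.toBilin'.IsSymm :=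
  Matrix.isSymm_toBilin'_iff_isSymm.2 isSymm_GE6

lemma posDef_toBilin'_GE6 : GE6.toBilin'.toQuadraticMap.PosDef := by
  intro x hx
  have hsq : 6 * GE6.toBilin' x x = 3 * (2 * x 0 - x 2) ^ 2 + 3 * (2 * x 1 - x 3) ^ 2 +
      (3 * x 2 - 2 * x 3) ^ 2 + 3 * (2 * x 5 - x 4) ^ 2 + (3 * x 4 - 2 * x 3) ^ 2 + x 3 ^ 2 := by
    rw [Matrix.toBilin'_apply]
    simp only [GE6, Fin.sum_univ_six, of_apply, cons_val]
    ring
  by_contra! h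
  rw [LinearMap.BilinMap.toQuadraticMap_apply] at h
  have h3 : x 3 = 0 := by nlinarith
  have h2 : x 2 = 0 := by nlinarith
  have h4 : x 4 = 0 := by nlinarith
  have h0 : x 0 = 0 := by nlinarith
  have h1 : x 1 = 0 := by nlinarith
  have h5 : x 5 = 0 := by nlinarith
  exact hx (by ext i; fin_cases i <;> assumption)

lemma reflTransGen_GE6 (i j : Fin 6) : Relation.ReflTransGen (fun i j ↦ GE6 i j ≠ 0) i j := by
  have hsymm : Std.Symm (fun i j ↦ GE6 i j ≠ 0) := ⟨fun i j h ↦ by rwa [isSymm_GE6.apply]⟩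
  have hthree (i : Fin 6) : Relation.ReflTransGen (fun i j ↦ GE6 i j ≠ 0) i 3 := by
    fin_cases i
    · exact .head (b := 2) (by decide) (.single (by decide))
    · exact .single (by decide)
    · exact .single (by decide)
    · exact .refl
    · exact .single (by decide)
    · exact .head (b := 4) (by decide) (.single (by decide))
  exact (hthree i).trans (symm (hthree j))

lemma isRootIrreducible_GE6 : IsRootIrreducible GE6.toBilin' := by
  refine isRootIrreducible_of_basis posDef_toBilin'_GE6 (Pi.basisFun ℤ (Fin 6)) ?_ ?_
  · simp only [Pi.basisFun_apply, Matrix.toBilin'_single]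
    decide
  · simpa only [Pi.basisFun_apply, Matrix.toBilin'_single] using reflTransGen_GE6

lemma isTriE6_iff {R : Matrix (Fin 6) (Fin 6) ℤ} :
    IsTriE6 R ↔ Rᵀ * GE6 * R = GE6 ∧ R ^ 2 + R + 1 = 0 := by
  constructor
  · rintro ⟨-, hiso, hpow, -, hfix⟩
    have hsum := geom_sum_eq_zero_of_pow_eq_one_of_fixedPointFree hpow hfix
    refine ⟨hiso, ?_⟩
    rw [← hsum]
    simp only [Finset.sum_range_succ, Finset.sum_range_zero, pow_zero, pow_one]
    abel
  · rintro ⟨hiso, hquad⟩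
    have hpow : R ^ 3 = 1 := by
      rw [← sub_eq_zero]
      calc R ^ 3 - 1 = (R - 1) * (R ^ 2 + R + 1) := by noncomm_ring
        _ = 0 := by rw [hquad, mul_zero]
    have hfix (v : Fin 6 → ℤ) (hv : R *ᵥ v = v) : v = 0 := by
      have h := congrArg (· *ᵥ v) hquad
      simp only [add_mulVec, pow_two, ← mulVec_mulVec, hv, one_mulVec, zero_mulVec] at h
      ext i
      have := congrFun h i
      simp only [Pi.add_apply, Pi.zero_apply] at this ⊢
      omega
    refine ⟨?_, hiso, hpow, ?_, hfix⟩
    · exact IsUnit.of_pow_eq_one (by rw [← det_pow, hpow, det_one]) three_ne_zero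
    · rintro rfl
      exact one_ne_zero (hfix 1 (one_mulVec 1))

/-- The fourth power of the Coxeter element `s₀ s₁ s₂ s₃ s₄ s₅`, whose order is `12`. It has no
eigenvalue `1` because no exponent `1, 4, 5, 7, 8, 11` of `E₆` is divisible by `3`. -/
def coxeterPowFour : Matrix (Fin 6) (Fin 6) ℤ :=
  !![0, 0, 0, 0, 0, -1; 1, 0, 0, 0, -1, 0; 1, 1, 0, -1, 0, -1;
    1, 1, 1, -1, -1, -1; 1, 1, 0, 0, -1, -1; 1, 0, 0, 0, 0, -1]

lemma isTriE6_coxeterPowFour : IsTriE6 coxeterPowFour :=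
  isTriE6_iff.2 (by decide +kernel)

namespace IsTriE6

variable {R S : Matrix (Fin 6) (Fin 6) ℤ}

lemma isEisensteinIsometry (hR : IsTriE6 R) :
    IsEisensteinIsometry GE6.toBilin' R.toLin' where
  map_map x y := by
    have h : GE6.toBilin'.comp R.toLin' R.toLin' = GE6.toBilin' := by
      rw [Matrix.toBilin'_comp, (isTriE6_iff.1 hR).1]
    exact LinearMap.congr_fun₂ h x y
  apply_apply x := by
    have h := congrArg (· *ᵥ x) (isTriE6_iff.1 hR).2
    simp only [add_mulVec, pow_two, ← mulVec_mulVec, one_mulVec, zero_mulVec] at h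
    simp only [toLin'_apply]
    rw [← sub_eq_zero, ← h]
    abel

lemma exists_frame (hR : IsTriE6 R) :
    ∃ a b c, IsEisensteinFrame GE6.toBilin' R.toLin' a b c :=
  hR.isEisensteinIsometry.exists_frame isSymm_toBilin'_GE6 posDef_toBilin'_GE6
    isRootIrreducible_GE6 (by simp) ⟨Pi.single 0 1, by rw [Matrix.toBilin'_single]; rfl⟩

lemma exists_frameGram_frameCompanion (hR : IsTriE6 R) :
    ∃ P : Matrix (Fin 6) (Fin 6) ℤ,
      IsUnit P.det ∧ Pᵀ * GE6 * P = frameGram ∧ R * P = P * frameCompanion := by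
  obtain ⟨a, b, c, hF⟩ := hR.exists_frame
  have hf := hR.isEisensteinIsometry
  set v : Fin 6 → Fin 6 → ℤ := ![a, R.toLin' a, b, R.toLin' b, c, R.toLin' c]
  have hGram : of v * GE6 * (of v)ᵀ = frameGram := by
    ext i j
    rw [← hF.apply_eq_frameGram hf isSymm_toBilin'_GE6, Matrix.toBilin'_apply', mul_mul_apply]
    rfl
  have hdet : IsUnit (of v).det := by
    have h := congrArg det hGram
    rw [det_mul, det_mul, det_transpose, det_GE6, det_frameGram] at h
    exact IsUnit.of_mul_eq_one (of v).det (by linarith)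
  refine ⟨(of v)ᵀ, by rwa [det_transpose], by rwa [transpose_transpose], ?_⟩
  ext i j
  have h := congrFun (hf.apply_frame a b c j) i
  simp only [Finset.sum_apply, Pi.smul_apply, smul_eq_mul, mul_comm (frameCompanion _ _)] at h
  exact h

lemma exists_conj (hR : IsTriE6 R) (hS : IsTriE6 S) :
    ∃ P : Matrix (Fin 6) (Fin 6) ℤ, IsUnit P.det ∧ Pᵀ * GE6 * P = GE6 ∧ S * P = P * R := by
  obtain ⟨P, hP, hPM, hRP⟩ := hR.exists_frameGram_frameCompanion
  obtain ⟨Q, hQ, hQM, hSQ⟩ := hS.exists_frameGram_frameCompanion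
  exact exists_isometry_conj hP hQ hPM hQM hRP hSQ

lemma charpoly_eq (hR : IsTriE6 R) : R.charpoly = (X ^ 2 + X + 1) ^ 3 := by
  have hprime : Prime (cyclotomic 3 ℤ) := (cyclotomic.irreducible three_pos).prime
  have haeval : aeval R (cyclotomic 3 ℤ) = 0 := by
    simpa [cyclotomic_three] using (isTriE6_iff.1 hR).2
  obtain ⟨k, hk, hdeg⟩ := exists_charpoly_eq_pow_of_prime hprime (cyclotomic.monic 3 ℤ) haeval
  have hk3 : k = 3 := by
    rw [natDegree_cyclotomic, Nat.totient_prime Nat.prime_three, Fintype.card_fin] at hdeg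
    omega
  rw [hk, hk3, cyclotomic_three]

end IsTriE6

/-- there exists an order three isometry of `E₆` without nonzero fixed
vectors; any two such are conjugate up to sign by an isometry of `E₆` (uniqueness up to
conjugation and sign in `O(E₆) ≅ ℤ/2ℤ × W(E₆)`); and each such isometry has
characteristic polynomial `(X²+X+1)³`, i.e. its eigenvalues are `ζ₃` and `ζ₃⁻¹`, each
with three-dimensional eigenspace. -/
theorem stmt_15 :
    (∃ R, IsTriE6 R) ∧
    (∀ R S, IsTriE6 R → IsTriE6 S →
      ∃ P : Matrix (Fin 6) (Fin 6) ℤ, IsUnit P.det ∧ Pᵀ * GE6 * P = GE6 ∧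
        (S * P = P * R ∨ S * P = -(P * R))) ∧
    (∀ R, IsTriE6 R → R.charpoly = (X ^ 2 + X + 1) ^ 3) := by
  refine ⟨⟨coxeterPowFour, isTriE6_coxeterPowFour⟩, fun R S hR hS ↦ ?_,
    fun R hR ↦ hR.charpoly_eq⟩
  obtain ⟨P, hP, hiso, hconj⟩ := hR.exists_conj hS
  exact ⟨P, hP, hiso, Or.inl hconj⟩
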